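/- Let (V, w, d) be a finite weighted metric space and for nonempty S ⊆ V define the k-means cost as cost(S) = ∑_{x∈V} w(x)·(min_{y∈S} d(x,y))². For nonempty A, B ⊆ V, let π(A,B) ⊆ B be a projection of A onto B, i.e. a set of the form { p(a) : a ∈ A } where for each a ∈ A, p(a) ∈ B satisfies d(a, p(a)) = min_{b∈B} d(a,b). Then for every 0 < ε < 1, cost(π(A,B)) ≤ (1 + 3ε)·cost(B) + (4 + 2/ε)·cost(A). -/

import Mathlib

/-!
Write `α = d(x, A)` and `β = d(x, B)`. If `a ∈ A` is nearest to `x`, then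
`d(x, p a) ≤ d(x, a) + d(a, B) ≤ α + (α + β)`, because `d(·, B)` is 1-Lipschitz. Hence every point
is within `2α + β` of the projection. Expanding `(2α + β)² = 4α² + 4αβ + β²` and applying the
weighted AM-GM inequality `2αβ ≤ εβ² + α²/ε` to the cross term bounds the square by
`(1 + 2ε)β² + (4 + 2/ε)α²`, and the theorem follows by summing against the weights.
-/

open Finset

/-- Distance from a point to a (nonempty) finite set: `min_{y ∈ S} d(x,y)`. -/
noncomputable def distToSet {V : Type*} [MetricSpace V] (x : V) (S : Finset V) : ℝ :=
  sInf ((fun y => dist x y) '' ↑S)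

/-- `k`-means cost of a center set `S` with respect to the point set `U`:
`∑_{x ∈ U} w(x) · d(x, S)²`. -/
noncomputable def kCost2 {V : Type*} [MetricSpace V] (w : V → NNReal) (S U : Finset V) : ℝ :=
  ∑ x ∈ U, (w x : ℝ) * (distToSet x S) ^ 2

/-- `OPT_k(U, X)` for `k`-means: minimum over `S ⊆ X` with `|S| = k` of `kCost2 w S U`. -/
noncomputable def kOPT2 {V : Type*} [MetricSpace V] (w : V → NNReal) (k : ℕ) (U X : Finset V) : ℝ :=
  sInf {c : ℝ | ∃ S : Finset V, S ⊆ X ∧ S.card = k ∧ c = kCost2 w S U}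

theorem distToSet_nonneg {V : Type*} [MetricSpace V] (x : V) (S : Finset V) :
    0 ≤ distToSet x S := by
  apply Real.sInf_nonneg
  rintro _ ⟨y, -, rfl⟩
  exact dist_nonneg

theorem distToSet_le {V : Type*} [MetricSpace V] (x : V) {S : Finset V} {y : V} (hy : y ∈ S) :
    distToSet x S ≤ dist x y :=
  csInf_le (S.finite_toSet.image _).bddBelow ⟨y, hy, rfl⟩

theorem exists_dist_eq_distToSet {V : Type*} [MetricSpace V] (x : V) {S : Finset V}
    (hS : S.Nonempty) : ∃ y ∈ S, dist x y = distToSet x S := by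
  obtain ⟨y, hy, h⟩ := Set.Nonempty.csInf_mem
    (Set.Nonempty.image (fun y => dist x y) (coe_nonempty.2 hS)) (S.finite_toSet.image _)
  exact ⟨y, hy, h⟩

theorem distToSet_le_dist_add {V : Type*} [MetricSpace V] (x y : V) {S : Finset V}
    (hS : S.Nonempty) : distToSet y S ≤ dist x y + distToSet x S := by
  obtain ⟨b, hb, h⟩ := exists_dist_eq_distToSet x hS
  rw [← h]
  exact (distToSet_le y hb).trans (dist_triangle_left y b x)

theorem distToSet_image_le {V : Type*} [MetricSpace V] [DecidableEq V] {A B : Finset V}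
    (hA : A.Nonempty) (hB : B.Nonempty) {p : V → V}
    (hpd : ∀ a ∈ A, dist a (p a) = distToSet a B) (x : V) :
    distToSet x (A.image p) ≤ 2 * distToSet x A + distToSet x B := by
  obtain ⟨a, ha, h⟩ := exists_dist_eq_distToSet x hA
  have h1 := distToSet_le x (mem_image_of_mem p ha)
  have h2 := dist_triangle x a (p a)
  have h3 := distToSet_le_dist_add x a hB
  rw [hpd a ha] at h2
  linarith

theorem sq_two_mul_add_le {α β ε : ℝ} (hε : 0 < ε) :
    (2 * α + β) ^ 2 ≤ (1 + 3 * ε) * β ^ 2 + (4 + 2 / ε) * α ^ 2 := by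
  -- The difference of the two sides is `(2 / ε) * (α - ε * β) ^ 2 + ε * β ^ 2`.
  have h : (1 + 3 * ε) * β ^ 2 + (4 + 2 / ε) * α ^ 2 - (2 * α + β) ^ 2
      = 2 / ε * (α - ε * β) ^ 2 + ε * β ^ 2 := by
    field_simp
    ring
  have : 0 ≤ 2 / ε * (α - ε * β) ^ 2 + ε * β ^ 2 := by positivity
  linarith

/-- Projection lemma for `k`-means:
`cost(π(A,B)) ≤ (1 + 3ε)·cost(B) + (4 + 2/ε)·cost(A)` for `0 < ε < 1`. -/
theorem projection_lemma_kmeans {V : Type*} [Fintype V] [MetricSpace V] [DecidableEq V]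
    (w : V → NNReal) (A B : Finset V) (hA : A.Nonempty) (hB : B.Nonempty)
    (p : V → V) (hpB : ∀ a ∈ A, p a ∈ B)
    (hpd : ∀ a ∈ A, dist a (p a) = distToSet a B)
    (ε : ℝ) (hε0 : 0 < ε) (hε1 : ε < 1) :
    kCost2 w (A.image p) Finset.univ ≤
      (1 + 3 * ε) * kCost2 w B Finset.univ + (4 + 2 / ε) * kCost2 w A Finset.univ := by
  unfold kCost2
  rw [mul_sum, mul_sum, ← sum_add_distrib]
  refine sum_le_sum fun x _ => ?_
  have h := (pow_le_pow_left₀ (distToSet_nonneg x _) (distToSet_image_le hA hB hpd x) 2).trans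
    (sq_two_mul_add_le hε0)
  calc _ ≤ _ := mul_le_mul_of_nonneg_left h (w x).coe_nonneg
    _ = _ := by ring
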